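/- (Main Lemma.) Let A ⊆ G = 𝔽₂ⁿ, N = 2ⁿ, be a set that is a union of ε·N pairwise element-disjoint triangles. Let H ≤ G be a subgroup with index T = |G/H|. If A contains fewer than (ε³/(64T²))·N² triangles (not necessarily disjoint), then there is a subgroup H' ≤ H such that: (1) F_A(G, H') ≥ F_A(G, H) + ε/3600; and (2) |G/H'| ≤ c^T, where c = 2^{2·log_{1+ε²/16}(4/ε)}. -/

import Mathlib

open scoped Classical BigOperators

noncomputable section

/-- The group `G = 𝔽₂ⁿ`. -/
abbrev G (n : ℕ) : Type := Fin n → ZMod 2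

/-- The coset `H + g` (note that `-g = g` in `𝔽₂ⁿ`). -/
def coset {n : ℕ} (H : AddSubgroup (G n)) (g : G n) : Set (G n) := {x | x + g ∈ H}

/-- The entropy function `f(x) = x log x` (with `f 0 = 0`). -/
def ent (x : ℝ) : ℝ := x * Real.log x

/-- The density of `A` on the coset `H + g`. -/
def dens {n : ℕ} (A : Set (G n)) (H : AddSubgroup (G n)) (g : G n) : ℝ :=
  (Nat.card ↥(A ∩ coset H g) : ℝ) / (Nat.card ↥H : ℝ)

/-- Mean entropy `F_A(G, H)` of partitioning `G` into cosets of `H`. -/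
def meanEntG {n : ℕ} (A : Set (G n)) (H : AddSubgroup (G n)) : ℝ :=
  (∑ g : G n, ent (dens A H g)) / (Fintype.card (G n) : ℝ)

/-- Mean entropy `F_A(H + g, H')` of partitioning the coset `H + g` into cosets of `H'`. -/
def meanEntCoset {n : ℕ} (A : Set (G n)) (H H' : AddSubgroup (G n)) (g : G n) : ℝ :=
  (∑ g₁ : ↥H, ent (dens A H' (g + ↑g₁))) / (Nat.card ↥H : ℝ)

/-- The standard bilinear form on `𝔽₂ⁿ`. -/
def dotp {n : ℕ} (x y : G n) : ZMod 2 := ∑ i, x i * y i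

/-- The character value `(-1)^{⟨x, y⟩}`. -/
def chi {n : ℕ} (x y : G n) : ℝ := if dotp x y = 0 then 1 else -1

/-- Fourier coefficient `f̂_H^g(η) = E_{x ∈ H} [f(x + g) · (-1)^{⟨x, η⟩}]`. -/
def fCoeff {n : ℕ} (H : AddSubgroup (G n)) (g : G n) (f : G n → ℝ) (η : G n) : ℝ :=
  (∑ x : ↥H, f (↑x + g) * chi ↑x η) / (Nat.card ↥H : ℝ)

/-- `f` is `ρ`-superregular on `H + g`: every Fourier coefficient at a character that is
nontrivial on `H` is at most `ρ` times the zeroth coefficient in absolute value. -/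
def SuperregularOn {n : ℕ} (H : AddSubgroup (G n)) (g : G n) (ρ : ℝ) (f : G n → ℝ) : Prop :=
  ∀ η : G n, (∃ x ∈ H, dotp x η ≠ 0) →
    |fCoeff H g f η| ≤ ρ * fCoeff H g f 0

/-- `H'` `(α, β, k)`-shatters `A` on `H + g`. -/
def Shatters {n : ℕ} (H' H : AddSubgroup (G n)) (A : Set (G n)) (g : G n)
    (α β k : ℝ) : Prop :=
  (Nat.card ↥H : ℝ) / (Nat.card ↥H' : ℝ) ≤ (2 : ℝ) ^ k ∧
  α ≤ (Nat.card {g' : ↥H //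
        (Nat.card ↥(A ∩ coset H' (g + ↑g')) : ℝ) ≤ β * dens A H g * (Nat.card ↥H' : ℝ)} : ℝ) /
      (Nat.card ↥H : ℝ)

/-- Number of triangles `(a, b, c)`, `a + b + c = 0`, with `a ∈ S₁`, `b ∈ S₂`, `c ∈ S₃`. -/
def triBetween {n : ℕ} (S₁ S₂ S₃ : Set (G n)) : ℕ :=
  Nat.card {p : G n × G n × G n // p.1 ∈ S₁ ∧ p.2.1 ∈ S₂ ∧ p.2.2 ∈ S₃ ∧ p.1 + p.2.1 + p.2.2 = 0}

/-- Number of triangles in `A`. -/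
def triCount {n : ℕ} (A : Set (G n)) : ℕ := triBetween A A A

/-- The annihilator of `K`: characters trivial on `K`. -/
def ann {n : ℕ} (K : AddSubgroup (G n)) : AddSubgroup (G n) where
  carrier := {η | ∀ x ∈ K, dotp x η = 0}
  zero_mem' := by intro x _; simp [dotp]
  add_mem' := by
    intro a b ha hb x hx
    have h : dotp x (a + b) = dotp x a + dotp x b := by
      simp [dotp, mul_add, Finset.sum_add_distrib]
    rw [h, ha x hx, hb x hx, add_zero]
  neg_mem' := by
    intro a ha x hx
    have h : dotp x (-a) = -dotp x a := by
      simp [dotp]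
    rw [h, ha x hx, neg_zero]

/-- Average of `f` over the coset `v + H'`. -/
def fbar {n : ℕ} (H' : AddSubgroup (G n)) (f : G n → ℝ) (v : G n) : ℝ :=
  (∑ y : ↥H', f (v + ↑y)) / (Nat.card ↥H' : ℝ)

/-- Tower function: `tower 0 = 1`, `tower (i+1) = 2 ^ tower i`. -/
def tower : ℕ → ℕ
  | 0 => 1
  | k + 1 => 2 ^ tower k

/-- `A` is `ε`-far from triangle-free: at least `ε N` elements must be removed from `A`
to destroy all triangles. -/
def FarFromTriangleFree {n : ℕ} (A : Set (G n)) (ε : ℝ) : Prop :=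
  ∀ B ⊆ A, (∀ x ∈ B, ∀ y ∈ B, ∀ z ∈ B, x + y + z ≠ 0) →
    ε * 2 ^ n ≤ (Nat.card ↥(A \ B) : ℝ)

/-- The set of elements of a triangle. -/
def elems {n : ℕ} (p : G n × G n × G n) : Set (G n) := {p.1, p.2.1, p.2.2}

/-- Indicator. -/
def ind {n : ℕ} (A : Set (G n)) (x : G n) : ℝ := if x ∈ A then 1 else 0

lemma gself {n : ℕ} (x : G n) : x + x = 0 := by
  funext i; exact CharTwo.add_self_eq_zero (x i)

lemma ind_nonneg {n : ℕ} (A : Set (G n)) (x : G n) : 0 ≤ ind A x := by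
  unfold ind; split_ifs <;> norm_num

lemma kpos {n : ℕ} (K : AddSubgroup (G n)) : (0:ℝ) < (Nat.card ↥K : ℝ) := by
  exact_mod_cast Nat.card_pos

lemma sum_ind {n : ℕ} (A : Set (G n)) : ∑ x, ind A x = (Nat.card ↥A : ℝ) := by
  unfold ind
  rw [Finset.sum_boole, Nat.card_eq_fintype_card, Fintype.card_subtype]

lemma dens_eq {n : ℕ} (A : Set (G n)) (K : AddSubgroup (G n)) (g : G n) :
    dens A K g = fbar K (ind A) g := by
  unfold dens fbar
  congr 1
  unfold ind
  rw [Finset.sum_boole, Nat.cast_inj, ← Fintype.card_subtype, ← Nat.card_eq_fintype_card]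
  refine Nat.card_congr ⟨fun x => ⟨⟨x.1 + g, x.2.2⟩, ?_⟩, fun y => ⟨g + y.1, y.2, ?_⟩, ?_, ?_⟩
  · have : g + ((x:G n) + g) = x := by rw [add_left_comm, gself, add_zero]
    show g + ((x:G n) + g) ∈ A
    rw [this]; exact x.2.1
  · show g + (y.1:G n) + g ∈ K
    have : g + (y.1:G n) + g = y.1 := by rw [add_comm g, add_assoc, gself, add_zero]
    rw [this]; exact y.1.2
  · intro x
    apply Subtype.ext
    show g + ((x:G n) + g) = x
    rw [add_left_comm, gself, add_zero]
  · intro y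
    apply Subtype.ext; apply Subtype.ext
    show g + (y.1:G n) + g = y.1
    rw [add_comm g, add_assoc, gself, add_zero]

lemma fbar_mono {n : ℕ} (K : AddSubgroup (G n)) (u v : G n → ℝ) (g : G n)
    (h : ∀ k ∈ K, u (g + k) ≤ v (g + k)) : fbar K u g ≤ fbar K v g := by
  unfold fbar
  exact div_le_div_of_nonneg_right (Finset.sum_le_sum fun k _ => h k k.2) (kpos K).le

lemma fbar_congr {n : ℕ} (K : AddSubgroup (G n)) (u v : G n → ℝ) (g : G n)
    (h : ∀ k ∈ K, u (g + k) = v (g + k)) : fbar K u g = fbar K v g :=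
  le_antisymm (fbar_mono K u v g fun k hk => (h k hk).le)
    (fbar_mono K v u g fun k hk => (h k hk).ge)

lemma fbar_const {n : ℕ} (K : AddSubgroup (G n)) (c : ℝ) (g : G n) :
    fbar K (fun _ => c) g = c := by
  unfold fbar
  rw [Finset.sum_const, Finset.card_univ, ← Nat.card_eq_fintype_card, nsmul_eq_mul]
  field_simp [(kpos K).ne']

lemma fbar_add {n : ℕ} (K : AddSubgroup (G n)) (u v : G n → ℝ) (g : G n) :
    fbar K (fun x => u x + v x) g = fbar K u g + fbar K v g := by
  unfold fbar
  rw [Finset.sum_add_distrib, add_div]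

lemma fbar_smul {n : ℕ} (K : AddSubgroup (G n)) (c : ℝ) (u : G n → ℝ) (g : G n) :
    fbar K (fun x => c * u x) g = c * fbar K u g := by
  unfold fbar
  rw [← Finset.mul_sum, mul_div_assoc]

lemma fbar_nonneg {n : ℕ} (K : AddSubgroup (G n)) (u : G n → ℝ) (g : G n)
    (h : ∀ x, 0 ≤ u x) : 0 ≤ fbar K u g := by
  unfold fbar
  exact div_nonneg (Finset.sum_nonneg fun k _ => h _) (kpos K).le

lemma fbar_ind_le_one {n : ℕ} (K : AddSubgroup (G n)) (A : Set (G n)) (g : G n) :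
    fbar K (ind A) g ≤ 1 := by
  rw [← fbar_const K 1 g]
  apply fbar_mono
  intro k _
  unfold ind; split_ifs <;> norm_num

lemma fbar_inv {n : ℕ} (K : AddSubgroup (G n)) (u : G n → ℝ) (g k : G n) (hk : k ∈ K) :
    fbar K u (g + k) = fbar K u g := by
  unfold fbar
  congr 1
  refine Fintype.sum_equiv (Equiv.addLeft (⟨k, hk⟩ : K)) _ _ ?_
  intro x
  simp [add_assoc]

lemma fbar_shift {n : ℕ} (K : AddSubgroup (G n)) (u : G n → ℝ) (g s : G n) :
    fbar K (fun x => u (x + s)) g = fbar K u (g + s) := by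
  unfold fbar
  congr 1
  refine Finset.sum_congr rfl fun x _ => ?_
  rw [add_right_comm]

lemma sum_fbar {n : ℕ} (K : AddSubgroup (G n)) (φ w : G n → ℝ)
    (hφ : ∀ g, ∀ k ∈ K, φ (g + k) = φ g) :
    ∑ g, φ g * fbar K w g = ∑ g, φ g * w g := by
  have h1 : ∀ k : K, ∑ g, φ g * w (g + k) = ∑ g, φ g * w g := by
    intro k
    refine Fintype.sum_equiv (Equiv.addRight (k : G n)) _ _ ?_
    intro x
    simp [hφ x k k.2]
  unfold fbar
  simp_rw [mul_div_assoc']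
  rw [← Finset.sum_div]
  simp_rw [Finset.mul_sum]
  rw [Finset.sum_comm, Finset.sum_congr rfl (fun k _ => h1 k), Finset.sum_const, Finset.card_univ,
    ← Nat.card_eq_fintype_card, nsmul_eq_mul]
  field_simp [(kpos K).ne']

lemma fbar_tower {n : ℕ} (K H : AddSubgroup (G n)) (hKH : K ≤ H) (w : G n → ℝ) (g : G n) :
    fbar H (fbar K w) g = fbar H w g := by
  have h1 : ∀ k : K, ∑ h : H, w (g + h + k) = ∑ h : H, w (g + h) := by
    intro k
    refine Fintype.sum_equiv (Equiv.addRight (⟨k, hKH k.2⟩ : H)) _ _ ?_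
    intro x
    simp [add_assoc]
  unfold fbar
  congr 1
  rw [← Finset.sum_div, Finset.sum_comm, Finset.sum_congr rfl (fun k _ => h1 k), Finset.sum_const,
    Finset.card_univ, ← Nat.card_eq_fintype_card, nsmul_eq_mul]
  field_simp [(kpos K).ne']

lemma fbar_jensen {n : ℕ} (K : AddSubgroup (G n)) (w : G n → ℝ) (hw : ∀ x, 0 ≤ w x) (g : G n) :
    ent (fbar K w g) ≤ fbar K (fun x => ent (w x)) g := by
  have h := Real.convexOn_mul_log.map_sum_le (t := (Finset.univ : Finset K))
    (w := fun _ => (1:ℝ) / Nat.card K) (p := fun k => w (g + k))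
    (fun _ _ => by have := kpos K; positivity)
    (by
      rw [Finset.sum_const, Finset.card_univ, ← Nat.card_eq_fintype_card, nsmul_eq_mul]
      field_simp [(kpos K).ne'])
    (fun k _ => hw _)
  simp only [smul_eq_mul, ← Finset.mul_sum] at h
  unfold fbar ent
  rw [one_div_mul_eq_div, one_div_mul_eq_div] at h
  exact h

lemma sum_coset {n : ℕ} (H : AddSubgroup (G n)) (w : G n → ℝ) (g : G n) :
    ∑ x, ind (coset H g) x * w x = Nat.card H * fbar H w g := by
  unfold fbar
  rw [mul_div_cancel₀ _ (kpos H).ne']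
  unfold ind
  simp_rw [ite_mul, one_mul, zero_mul]
  rw [← Finset.sum_filter]
  symm
  refine Finset.sum_bij (fun k _ => g + k) ?_ ?_ ?_ ?_
  · intro k _
    simp only [Finset.mem_filter, Finset.mem_univ, true_and]
    show g + (k:G n) + g ∈ H
    rw [add_comm g, add_assoc, gself, add_zero]; exact k.2
  · intro a _ b _ hab
    exact Subtype.ext (add_left_cancel hab)
  · intro b hb
    simp only [Finset.mem_filter, Finset.mem_univ, true_and] at hb
    refine ⟨⟨b + g, hb⟩, Finset.mem_univ _, ?_⟩
    show g + (b + g) = b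
    rw [add_left_comm, gself, add_zero]
  · intro _ _; rfl

lemma sum_ind_inv {n : ℕ} (K : AddSubgroup (G n)) (A : Set (G n)) (φ : G n → ℝ)
    (hφ : ∀ g, ∀ k ∈ K, φ (g + k) = φ g) :
    ∑ g, φ g * fbar K (ind A) g = ∑ g, φ g * ind A g := sum_fbar K φ _ hφ

-- Fourier
lemma dotp_add_left {n : ℕ} (x y η : G n) : dotp (x + y) η = dotp x η + dotp y η := by
  simp [dotp, add_mul, Finset.sum_add_distrib]

lemma dotp_add_right {n : ℕ} (x y η : G n) : dotp η (x + y) = dotp η x + dotp η y := by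
  simp [dotp, mul_add, Finset.sum_add_distrib]

lemma sgn_add : ∀ a b : ZMod 2, (if a + b = 0 then (1:ℝ) else -1) =
    (if a = 0 then 1 else -1) * (if b = 0 then 1 else -1) := by
  intro a b
  have h2 : ∀ a : ZMod 2, a = 0 ∨ a = 1 := by decide
  have h11 : (1:ZMod 2) + 1 = 0 := by decide
  rcases h2 a with rfl | rfl <;> rcases h2 b with rfl | rfl <;> simp [h11]

lemma chi_add_left {n : ℕ} (x y η : G n) : chi (x + y) η = chi x η * chi y η := by
  unfold chi; rw [dotp_add_left]; exact sgn_add _ _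

lemma chi_add_right {n : ℕ} (x y η : G n) : chi η (x + y) = chi η x * chi η y := by
  unfold chi; rw [dotp_add_right]; exact sgn_add _ _

lemma abs_chi {n : ℕ} (x η : G n) : |chi x η| = 1 := by
  unfold chi; split_ifs <;> simp

lemma chi_sum {n : ℕ} (x : G n) : ∑ η, chi x η = if x = 0 then (2:ℝ)^n else 0 := by
  split_ifs with h
  · subst h
    simp [chi, dotp]
  · obtain ⟨i, hi⟩ : ∃ i, x i ≠ 0 := by
      by_contra hc; push Not at hc; exact h (funext hc)
    have hd : dotp x (Pi.single i 1) ≠ 0 := by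
      unfold dotp
      rw [Finset.sum_eq_single i]
      · simpa using hi
      · intro b _ hb; simp [Pi.single_eq_of_ne hb]
      · simp
    have h3 : chi x (Pi.single i 1) = -1 := by unfold chi; rw [if_neg hd]
    generalize (Pi.single i 1 : G n) = s at h3
    have h2 : ∑ η, chi x η = ∑ η, chi x (η + s) :=
      (Equiv.sum_comp (Equiv.addRight s) (chi x)).symm
    simp_rw [chi_add_right, h3] at h2
    rw [← Finset.sum_mul] at h2
    linarith

lemma parseval {n : ℕ} (u : G n → ℝ) :
    ∑ η, (∑ x, u x * chi x η)^2 = 2^n * ∑ x, (u x)^2 := by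
  have : ∀ η, (∑ x, u x * chi x η)^2 = ∑ x, ∑ y, u x * u y * chi (x + y) η := by
    intro η
    rw [sq, Finset.sum_mul_sum]
    refine Finset.sum_congr rfl fun x _ => Finset.sum_congr rfl fun y _ => ?_
    rw [chi_add_left]; ring
  simp_rw [this]
  rw [Finset.sum_comm, Finset.mul_sum]
  refine Finset.sum_congr rfl fun x _ => ?_
  rw [Finset.sum_comm]
  simp_rw [← Finset.mul_sum, chi_sum]
  rw [Finset.sum_eq_single x]
  · rw [gself, if_pos rfl]; ring
  · intro b _ hb
    rw [if_neg, mul_zero]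
    intro h
    apply hb
    have : x + (x + b) = b := by rw [← add_assoc, gself, zero_add]
    rw [h, add_zero] at this; exact this.symm
  · simp

lemma fourier3 {n : ℕ} (f u v : G n → ℝ) :
    ∑ η, (∑ x, f x * chi x η) * (∑ y, u y * chi y η) * (∑ z, v z * chi z η)
      = 2^n * ∑ x, f x * ∑ y, u y * v (x + y) := by
  have : ∀ η, (∑ x, f x * chi x η) * (∑ y, u y * chi y η) * (∑ z, v z * chi z η)
      = ∑ x, ∑ y, ∑ z, f x * u y * v z * chi (x + y + z) η := by
    intro η
    rw [Finset.sum_mul_sum, Finset.sum_mul]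
    refine Finset.sum_congr rfl fun x _ => ?_
    rw [Finset.sum_mul]
    refine Finset.sum_congr rfl fun y _ => ?_
    rw [Finset.mul_sum]
    refine Finset.sum_congr rfl fun z _ => ?_
    rw [chi_add_left, chi_add_left]; ring
  simp_rw [this]
  rw [Finset.sum_comm, Finset.mul_sum]
  refine Finset.sum_congr rfl fun x _ => ?_
  rw [Finset.sum_comm, Finset.mul_sum, Finset.mul_sum]
  refine Finset.sum_congr rfl fun y _ => ?_
  rw [Finset.sum_comm]
  simp_rw [← Finset.mul_sum, chi_sum]
  rw [Finset.sum_eq_single (x + y)]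
  · rw [gself, if_pos rfl]; ring
  · intro b _ hb
    rw [if_neg, mul_zero]
    intro h
    apply hb
    have : (x + y) + (x + y + b) = b := by rw [← add_assoc, gself, zero_add]
    rw [h, add_zero] at this; exact this.symm
  · simp

lemma fourier_bound {n : ℕ} (f u v : G n → ℝ) (R : ℝ)
    (hR : ∀ η, |∑ x, f x * chi x η| ≤ R) :
    -(R / 2 * (∑ x, (u x)^2 + ∑ x, (v x)^2)) ≤ ∑ x, f x * ∑ y, u y * v (x + y) := by
  have hN : (0:ℝ) < 2^n := by positivity
  have h : -(R / 2 * (∑ η, (∑ x, u x * chi x η)^2 + ∑ η, (∑ x, v x * chi x η)^2))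
      ≤ ∑ η, (∑ x, f x * chi x η) * (∑ y, u y * chi y η) * (∑ z, v z * chi z η) := by
    rw [← Finset.sum_add_distrib, Finset.mul_sum, ← Finset.sum_neg_distrib]
    refine Finset.sum_le_sum fun η _ => ?_
    have h1 := hR η
    set F := ∑ x, f x * chi x η
    set U := ∑ x, u x * chi x η
    set V := ∑ x, v x * chi x η
    have h2 : |F * U * V| ≤ R / 2 * (U^2 + V^2) := by
      rw [mul_assoc, abs_mul]
      have h3 : |U * V| ≤ (U^2+V^2)/2 := by
        rw [abs_le]; constructor <;> nlinarith [sq_nonneg (U-V), sq_nonneg (U+V)]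
      calc |F| * |U * V| ≤ R * ((U^2+V^2)/2) :=
            mul_le_mul h1 h3 (abs_nonneg _) ((abs_nonneg _).trans h1)
        _ = _ := by ring
    exact (abs_le.mp h2).1
  rw [parseval, parseval, fourier3] at h
  have : -(R / 2 * (2^n * ∑ x, (u x)^2 + 2^n * ∑ x, (v x)^2))
    = 2^n * -(R / 2 * (∑ x, (u x)^2 + ∑ x, (v x)^2)) := by ring
  rw [this] at h
  exact le_of_mul_le_mul_left h hN

/-- Superregularity in terms of `fbar`. -/
def SR {n : ℕ} (K : AddSubgroup (G n)) (g : G n) (ρ : ℝ) (B : Set (G n)) : Prop :=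
  ∀ η : G n, (∃ x ∈ K, dotp x η ≠ 0) →
    |fbar K (fun x => ind B x * chi x η) g| ≤ ρ * fbar K (ind B) g

/-- Kernel of a character. -/
def kerη {n : ℕ} (η : G n) : AddSubgroup (G n) where
  carrier := {x | dotp x η = 0}
  zero_mem' := by simp [dotp]
  add_mem' := by
    intro a b ha hb
    show dotp (a + b) η = 0
    rw [dotp_add_left, show dotp a η = 0 from ha, show dotp b η = 0 from hb, add_zero]
  neg_mem' := by
    intro a ha
    show dotp (-a) η = 0
    have : -a = a := neg_eq_of_add_eq_zero_left (gself a)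
    rw [this]; exact ha

lemma half_equiv {n : ℕ} (H : AddSubgroup (G n)) (η h1 : G n) (hh : h1 ∈ H)
    (hd : dotp h1 η ≠ 0) :
    ∃ e : (↥(H ⊓ kerη η) ⊕ ↥(H ⊓ kerη η)) ≃ ↥H,
      (∀ k, (e (Sum.inl k) : G n) = k) ∧ (∀ k, (e (Sum.inr k) : G n) = h1 + k) := by
  have h2 : ∀ a b : ZMod 2, a ≠ 0 → b ≠ 0 → a + b = 0 := by decide
  let e : (↥(H ⊓ kerη η) ⊕ ↥(H ⊓ kerη η)) → ↥H :=
    Sum.elim (fun k => ⟨k, k.2.1⟩) (fun k => ⟨h1 + k, H.add_mem hh k.2.1⟩)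
  have hk : ∀ k : ↥(H ⊓ kerη η), dotp (k : G n) η = 0 := fun k => k.2.2
  refine ⟨Equiv.ofBijective e ⟨?_, ?_⟩, fun _ => rfl, fun _ => rfl⟩
  · rintro (a | a) (b | b) hab
    · have : (a : G n) = b := congrArg (fun z : ↥H => (z : G n)) hab
      rw [Subtype.ext this]
    · exfalso
      have : (a : G n) = h1 + b := congrArg (fun z : ↥H => (z : G n)) hab
      have h3 := hk a
      rw [this, dotp_add_left, hk b, add_zero] at h3
      exact hd h3
    · exfalso
      have : h1 + (a : G n) = b := congrArg (fun z : ↥H => (z : G n)) hab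
      have h3 := hk b
      rw [← this, dotp_add_left, hk a, add_zero] at h3
      exact hd h3
    · have : h1 + (a : G n) = h1 + b := congrArg (fun z : ↥H => (z : G n)) hab
      rw [Subtype.ext (add_left_cancel this)]
  · rintro ⟨x, hx⟩
    by_cases h : dotp x η = 0
    · exact ⟨Sum.inl ⟨x, hx, h⟩, rfl⟩
    · refine ⟨Sum.inr ⟨h1 + x, H.add_mem hh hx, ?_⟩, ?_⟩
      · show dotp (h1 + x) η = 0
        rw [dotp_add_left]; exact h2 _ _ hd h
      · apply Subtype.ext
        show h1 + (h1 + x) = x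
        rw [← add_assoc, gself, zero_add]

lemma half_card {n : ℕ} (H : AddSubgroup (G n)) (η h1 : G n) (hh : h1 ∈ H)
    (hd : dotp h1 η ≠ 0) : Nat.card ↥H = 2 * Nat.card ↥(H ⊓ kerη η) := by
  obtain ⟨e, -, -⟩ := half_equiv H η h1 hh hd
  rw [← Nat.card_congr e, Nat.card_sum]; ring

lemma half_fbar {n : ℕ} (H : AddSubgroup (G n)) (η h1 : G n) (hh : h1 ∈ H)
    (hd : dotp h1 η ≠ 0) (w : G n → ℝ) (g : G n) :
    fbar H w g = (fbar (H ⊓ kerη η) w g + fbar (H ⊓ kerη η) w (g + h1)) / 2 := by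
  have hc := half_card H η h1 hh hd
  have hp := kpos (H ⊓ kerη η)
  obtain ⟨e, e1, e2⟩ := half_equiv H η h1 hh hd
  have hs : ∑ y : ↥H, w (g + y) = ∑ y : ↥(H ⊓ kerη η), w (g + y)
      + ∑ y : ↥(H ⊓ kerη η), w (g + h1 + y) := by
    rw [← Equiv.sum_comp e, Fintype.sum_sum_type]
    simp_rw [e1, e2, add_assoc]
  unfold fbar
  rw [hs, hc]
  push_cast
  field_simp

lemma fbar_ker {n : ℕ} (K : AddSubgroup (G n)) (η : G n) (hK : ∀ k ∈ K, dotp k η = 0)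
    (B : Set (G n)) (g : G n) :
    fbar K (fun x => ind B x * chi x η) g = chi g η * fbar K (ind B) g := by
  rw [← fbar_smul]
  apply fbar_congr
  intro k hk
  have : chi k η = 1 := by unfold chi; rw [if_pos (hK k hk)]
  rw [chi_add_left, this]; ring

lemma exists_SR {n : ℕ} (ρ : ℝ) (hρ : 0 < ρ) (B : Set (G n)) :
    ∀ m : ℕ, ∀ (H : AddSubgroup (G n)) (g : G n), Nat.card H = m →
      ∃ K ≤ H, ∃ g', g' + g ∈ H ∧ ∃ j : ℕ, (1 + ρ)^j * fbar H (ind B) g ≤ fbar K (ind B) g' ∧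
        Nat.card H ≤ 2^j * Nat.card K ∧ SR K g' ρ B := by
  intro m
  induction m using Nat.strong_induction_on with
  | _ m ih =>
  intro H g hm
  by_cases hS : SR H g ρ B
  · exact ⟨H, le_rfl, g, by rw [gself]; exact H.zero_mem, 0, by simp, by simp, hS⟩
  unfold SR at hS
  push Not at hS
  obtain ⟨η, ⟨h1, hh, hd⟩, hlt⟩ := hS
  have hc := half_card H η h1 hh hd
  have hpos : 0 < Nat.card ↥(H ⊓ kerη η) := Nat.card_pos
  have hker : ∀ k ∈ H ⊓ kerη η, dotp k η = 0 := fun k hk => hk.2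
  have hf := half_fbar H η h1 hh hd (ind B) g
  have hchi : chi h1 η = -1 := by unfold chi; rw [if_neg hd]
  rw [half_fbar H η h1 hh hd (fun x => ind B x * chi x η), fbar_ker _ _ hker, fbar_ker _ _ hker, chi_add_left, hchi] at hlt
  obtain ⟨g2, hg2, hinc⟩ : ∃ g2, g2 + g ∈ H ∧
      (1 + ρ) * fbar H (ind B) g ≤ fbar (H ⊓ kerη η) (ind B) g2 := by
    set a := fbar (H ⊓ kerη η) (ind B) g
    set b := fbar (H ⊓ kerη η) (ind B) (g + h1)
    have e : (chi g η * a + chi g η * -1 * b) / 2 = chi g η * ((a - b)/2) := by ring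
    rw [e, abs_mul, abs_chi, one_mul, lt_abs] at hlt
    rcases hlt with hlt | hlt
    · exact ⟨g, by rw [gself]; exact H.zero_mem, by linarith⟩
    · refine ⟨g + h1, ?_, by linarith⟩
      rw [add_comm g h1, add_assoc, gself, add_zero]; exact hh
  obtain ⟨K, hK, g', hg', j, hj1, hj2, hSR⟩ := ih _ (by omega) (H ⊓ kerη η) g2 rfl
  refine ⟨K, hK.trans inf_le_left, g', ?_, j + 1, ?_, ?_, hSR⟩
  · have := H.add_mem hg'.1 hg2
    rwa [add_assoc, ← add_assoc g2, gself, zero_add] at this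
  · refine le_trans ?_ hj1
    rw [pow_succ, mul_assoc]
    exact mul_le_mul_of_nonneg_left hinc (by positivity)
  · rw [hc, pow_succ]; nlinarith

lemma sum_ind_coset {n : ℕ} (H : AddSubgroup (G n)) (g : G n) (B : Set (G n))
    (hB : B ⊆ coset H g) : ∑ x, ind B x = Nat.card H * fbar H (ind B) g := by
  rw [← sum_coset]
  refine Finset.sum_congr rfl fun x _ => ?_
  unfold ind
  by_cases h : x ∈ B
  · simp [h, hB h]
  · simp [h]

lemma exists_piece {n : ℕ} (ρ : ℝ) (hρ : 0 < ρ) (H : AddSubgroup (G n)) (g : G n)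
    (A₁ : Set (G n)) (hA : A₁ ⊆ coset H g) (hd : 0 < fbar H (ind A₁) g) (τ : G n → ℝ)
    (hτ : ∀ x, 0 ≤ τ x) (M : ℝ) (hM : ∑ x, ind A₁ x * τ x < M) :
    ∃ K ≤ H, ∃ g', g' + g ∈ H ∧ ∃ B ⊆ A₁, B ⊆ coset K g' ∧ 0 < fbar K (ind B) g' ∧
      ∃ j : ℕ, (1 + ρ)^j * (fbar H (ind A₁) g / 2) ≤ 1 ∧ Nat.card H ≤ 2^j * Nat.card K ∧
      SR K g' ρ B ∧ (∑ x, ind B x * τ x) * (∑ x, ind A₁ x) ≤ 2 * M * ∑ x, ind B x := by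
  by_contra hcon
  have hA1 := sum_ind_coset H g A₁ hA
  have hApos : 0 < ∑ x, ind A₁ x := by rw [hA1]; exact mul_pos (kpos H) hd
  set a := ∑ x, ind A₁ x with ha
  let P : Finset (Set (G n)) := Finset.univ.filter
    (fun R => R ⊆ A₁ ∧ 2 * M * (∑ x, ind R x) ≤ (∑ x, ind R x * τ x) * a)
  have hne : P.Nonempty := ⟨∅, by simp [P, ind]⟩
  obtain ⟨R, hR, hmax⟩ := Finset.exists_max_image P (fun R => ∑ x, ind R x) hne
  simp only [P, Finset.mem_filter, Finset.mem_univ, true_and] at hR hmax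
  obtain ⟨hRA, hR2⟩ := hR
  have hMpos : 0 < M := lt_of_le_of_lt
    (Finset.sum_nonneg fun x _ => mul_nonneg (ind_nonneg _ _) (hτ x)) hM
  have hRτ : ∑ x, ind R x * τ x < M := by
    refine lt_of_le_of_lt (Finset.sum_le_sum fun x _ => ?_) hM
    refine mul_le_mul_of_nonneg_right ?_ (hτ x)
    unfold ind
    by_cases h : x ∈ R
    · simp [h, hRA h]
    · simp only [h, if_false]; split_ifs <;> norm_num
  have hRsmall : ∑ x, ind R x ≤ a / 2 := by
    by_contra hc
    push Not at hc
    nlinarith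
  have hsplit : ∀ x, ind (A₁ \ R) x = ind A₁ x - ind R x := by
    intro x
    unfold ind
    by_cases h : x ∈ R
    · simp [h, hRA h]
    · simp [h]
  have hrest : a / 2 ≤ ∑ x, ind (A₁ \ R) x := by
    simp_rw [hsplit, Finset.sum_sub_distrib]
    linarith
  rw [sum_ind_coset H g (A₁ \ R) (Set.sdiff_subset.trans hA), hA1] at hrest
  have hdens : fbar H (ind A₁) g / 2 ≤ fbar H (ind (A₁ \ R)) g := by
    have := kpos H
    by_contra hc
    push Not at hc
    nlinarith
  obtain ⟨K, hK, g', hg', j, hj1, hj2, hSR⟩ := exists_SR ρ hρ (A₁ \ R) _ H g rfl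
  have hBc : ∀ k ∈ K, ind ((A₁ \ R) ∩ coset K g') (g' + k) = ind (A₁ \ R) (g' + k) := by
    intro k hk
    have : g' + k ∈ coset K g' := by
      show g' + k + g' ∈ K
      rw [add_comm g', add_assoc, gself, add_zero]; exact hk
    unfold ind
    by_cases h : g' + k ∈ A₁ \ R
    · rw [if_pos h, if_pos ⟨h, this⟩]
    · rw [if_neg h, if_neg (fun hx => h hx.1)]
  have hB1 : fbar K (ind ((A₁ \ R) ∩ coset K g')) g' = fbar K (ind (A₁ \ R)) g' :=
    fbar_congr _ _ _ _ hBc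
  have hjd : (1 + ρ)^j * (fbar H (ind A₁) g / 2) ≤ fbar K (ind (A₁ \ R)) g' :=
    le_trans (mul_le_mul_of_nonneg_left hdens (by positivity)) hj1
  have hBpos : 0 < fbar K (ind ((A₁ \ R) ∩ coset K g')) g' := by
    rw [hB1]
    refine lt_of_lt_of_le ?_ hjd
    positivity
  have hBsub : (A₁ \ R) ∩ coset K g' ⊆ A₁ := fun x hx => hx.1.1
  have hlt : 2 * M * ∑ x, ind ((A₁ \ R) ∩ coset K g') x
      < (∑ x, ind ((A₁ \ R) ∩ coset K g') x * τ x) * a := by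
    by_contra hc
    push Not at hc
    refine hcon ⟨K, hK, g', hg', (A₁ \ R) ∩ coset K g', hBsub, Set.inter_subset_right, hBpos, j,
      hjd.trans (fbar_ind_le_one _ _ _), hj2, ?_, hc⟩
    intro η hη
    have := hSR η hη
    rw [hB1]
    rwa [fbar_congr K (fun x => ind ((A₁ \ R) ∩ coset K g') x * chi x η)
      (fun x => ind (A₁ \ R) x * chi x η) g' (fun k hk => by simp only [hBc k hk])]
  have hBp2 : 0 < ∑ x, ind ((A₁ \ R) ∩ coset K g') x := by
    rw [sum_ind_coset K g' _ Set.inter_subset_right]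
    exact mul_pos (kpos K) hBpos
  set B := (A₁ \ R) ∩ coset K g' with hBdef
  have hun : ∀ x, ind (R ∪ B) x = ind R x + ind B x := by
    intro x
    unfold ind
    by_cases h : x ∈ R
    · have : x ∉ B := fun hx => hx.1.2 h
      simp [h, this]
    · simp [h]
  have := hmax (R ∪ B) ⟨Set.union_subset hRA hBsub, by
    simp_rw [hun, add_mul, Finset.sum_add_distrib]
    linarith⟩
  simp_rw [hun, Finset.sum_add_distrib] at this
  linarith

/-- Shattering in terms of `fbar`. -/
def Shat {n : ℕ} (A : Set (G n)) (H K : AddSubgroup (G n)) (g : G n) : Prop :=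
  1 / 8 ≤ fbar H (fun y => if fbar K (ind A) y ≤ fbar H (ind A) g / 2 then 1 else 0) g

lemma mem_coset_add {n : ℕ} (H : AddSubgroup (G n)) (g k : G n) (hk : k ∈ H) :
    g + k ∈ coset H g := by
  show g + k + g ∈ H
  rw [add_comm g, add_assoc, gself, add_zero]; exact hk

lemma ind_inter {n : ℕ} (A C : Set (G n)) (x : G n) : ind (A ∩ C) x = ind C x * ind A x := by
  unfold ind
  by_cases h1 : x ∈ A <;> by_cases h2 : x ∈ C <;> simp [h1, h2]

lemma ind_mem {n : ℕ} (A : Set (G n)) (x : G n) (h : x ∈ A) : ind A x = 1 := by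
  unfold ind; rw [if_pos h]

lemma ind_sq {n : ℕ} (A : Set (G n)) (x : G n) : ind A x ^ 2 = ind A x := by
  unfold ind; split_ifs <;> norm_num

lemma ind_coset_inv {n : ℕ} (H : AddSubgroup (G n)) (g0 g k : G n) (hk : k ∈ H) :
    ind (coset H g0) (g + k) = ind (coset H g0) g := by
  have : g + k ∈ coset H g0 ↔ g ∈ coset H g0 := by
    show g + k + g0 ∈ H ↔ g + g0 ∈ H
    rw [add_right_comm]
    exact H.add_mem_cancel_right hk
  unfold ind
  by_cases h : g ∈ coset H g0
  · rw [if_pos h, if_pos (this.2 h)]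
  · rw [if_neg h, if_neg (fun hx => h (this.1 hx))]

lemma fbar_chi_zero {n : ℕ} (K : AddSubgroup (G n)) (η g h1 : G n) (hh : h1 ∈ K)
    (hd : dotp h1 η ≠ 0) : fbar K (fun x => chi x η) g = 0 := by
  have hchi : chi h1 η = -1 := by unfold chi; rw [if_neg hd]
  have h1' := fbar_shift K (fun x => chi x η) g h1
  rw [fbar_inv _ _ _ _ hh] at h1'
  simp_rw [chi_add_left, hchi, mul_comm _ (-1:ℝ)] at h1'
  rw [fbar_smul] at h1'
  linarith

lemma balanced_bound {n : ℕ} (K : AddSubgroup (G n)) (g' : G n) (ρ : ℝ) (hρ : 0 < ρ)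
    (B : Set (G n)) (hB : B ⊆ coset K g') (hSR : SR K g' ρ B) (η : G n) :
    |∑ x, (ind B x - fbar K (ind B) g' * ind (coset K g') x) * chi x η|
      ≤ ρ * (Nat.card K * fbar K (ind B) g') := by
  have hδ : 0 ≤ fbar K (ind B) g' := fbar_nonneg _ _ _ (ind_nonneg B)
  have hk := kpos K
  have h1 : ∑ x, ind B x * chi x η = Nat.card K * fbar K (fun x => ind B x * chi x η) g' := by
    rw [← sum_coset]
    refine Finset.sum_congr rfl fun x _ => ?_
    by_cases h : x ∈ B
    · rw [ind_mem _ _ (hB h), one_mul]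
    · have : ind B x = 0 := by unfold ind; rw [if_neg h]
      rw [this]; ring
  have h2 : ∑ x, ind (coset K g') x * chi x η = Nat.card K * fbar K (fun x => chi x η) g' :=
    sum_coset _ _ _
  have h3 : ∑ x, (ind B x - fbar K (ind B) g' * ind (coset K g') x) * chi x η
      = Nat.card K * (fbar K (fun x => ind B x * chi x η) g'
        - fbar K (ind B) g' * fbar K (fun x => chi x η) g') := by
    simp_rw [sub_mul, Finset.sum_sub_distrib, mul_assoc, ← Finset.mul_sum]
    rw [h1, h2]; ring
  rw [h3, abs_mul, abs_of_pos hk]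
  by_cases hη : ∃ x ∈ K, dotp x η ≠ 0
  · have := hSR η hη
    obtain ⟨h, hh, hd⟩ := hη
    rw [fbar_chi_zero K η g' h hh hd, mul_zero, sub_zero]
    nlinarith
  · push Not at hη
    have e2 : fbar K (fun x => chi x η) g' = chi g' η := by
      rw [← fbar_const K (chi g' η) g']
      apply fbar_congr
      intro k hk
      have : chi k η = 1 := by unfold chi; rw [if_pos (hη k hk)]
      rw [chi_add_left, this, mul_one]
    rw [fbar_ker K η hη, e2, mul_comm (chi g' η), sub_self]
    rw [abs_zero, mul_zero]
    positivity

lemma fbar_tau {n : ℕ} (K : AddSubgroup (G n)) (u v : G n → ℝ) (g : G n) :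
    fbar K (fun x => ∑ y, u y * v (x + y)) g = ∑ y, u y * fbar K v (y + g) := by
  unfold fbar
  rw [Finset.sum_comm, Finset.sum_div]
  refine Finset.sum_congr rfl fun y _ => ?_
  rw [← Finset.mul_sum, mul_div_assoc]
  congr 2
  refine Finset.sum_congr rfl fun k _ => ?_
  congr 1
  abel

lemma shatter_num (ε X d1 d2 d3 b h S : ℝ) (hε : 0 < ε) (hε1 : ε ≤ 1)
    (hd1 : 3 / 4 * ε ≤ d1) (hd2 : 3 / 4 * ε ≤ d2) (hd3 : 3 / 4 * ε ≤ d3)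
    (hbp : 0 < b) (hH : 0 < h) (hXlow : 3 / 16 * (d2 * d3) ≤ X)
    (hfb : -(ε^2/16 * b / 2 * (h * d2 + h * d3)) ≤ S - b * h * X)
    (hcnt : S * (h * d1) ≤ 2 * ((ε / 4)^3 * h^2) * b) : False := by
  have hd2p : 0 < d2 := by nlinarith
  have hd3p : 0 < d3 := by nlinarith
  have hd1p : 0 < d1 := by nlinarith
  have k1 : b * h * (X - ε^2/32 * (d2 + d3)) ≤ S := by
    linarith
  have k2 : (b * h^2) * (d1 * (X - ε^2/32 * (d2 + d3))) ≤ (b * h^2) * (2 * (ε/4)^3) := by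
    have := mul_le_mul_of_nonneg_right k1 (mul_pos hH hd1p).le
    linarith
  have k3 := le_of_mul_le_mul_left k2 (by positivity)
  have k4 : ε^2/32 * (d2 + d3) ≤ d2 * d3 / 12 := by
    have a1 : ε^2 * d2 ≤ 4/3 * (d2 * d3) := by nlinarith [mul_le_mul_of_nonneg_left hd3 hd2p.le, mul_nonneg (mul_nonneg hε.le hd2p.le) (sub_nonneg.2 hε1)]
    have a2 : ε^2 * d3 ≤ 4/3 * (d2 * d3) := by nlinarith [mul_le_mul_of_nonneg_left hd2 hd3p.le, mul_nonneg (mul_nonneg hε.le hd3p.le) (sub_nonneg.2 hε1)]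
    linarith
  have k5 : d1 * (5/48 * (d2 * d3)) ≤ 2 * (ε/4)^3 := by
    refine le_trans (mul_le_mul_of_nonneg_left ?_ hd1p.le) k3
    linarith
  have k6 : (3/4*ε) * ((3/4*ε) * (3/4*ε)) ≤ d1 * (d2 * d3) := by
    have : 0 ≤ 3/4*ε := by positivity
    exact mul_le_mul hd1 (mul_le_mul hd2 hd3 this hd2p.le) (by positivity) hd1p.le
  have : 0 < ε^3 := by positivity
  nlinarith

set_option maxHeartbeats 1000000 in
lemma shatter {n : ℕ} (A : Set (G n)) (H : AddSubgroup (G n)) (g1 g2 g3 : G n)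
    (hg : g1 + g2 + g3 ∈ H) (ε : ℝ) (hε : 0 < ε) (hε1 : ε ≤ 1)
    (hd1 : 3 / 4 * ε ≤ fbar H (ind A) g1) (hd2 : 3 / 4 * ε ≤ fbar H (ind A) g2)
    (hd3 : 3 / 4 * ε ≤ fbar H (ind A) g3)
    (htri : ∑ x, ind (A ∩ coset H g1) x *
      ∑ y, ind (A ∩ coset H g2) y * ind (A ∩ coset H g3) (x + y)
        < (ε / 4)^3 * (Nat.card H : ℝ)^2) :
    ∃ K ≤ H, ∃ j : ℕ, (1 + ε^2/16)^j * (3 / 8 * ε) ≤ 1 ∧ Nat.card H ≤ 2^j * Nat.card K ∧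
      (Shat A H K g2 ∨ Shat A H K g3) := by
  have hH := kpos H
  have hr : ∀ g, fbar H (ind (A ∩ coset H g)) g = fbar H (ind A) g := by
    intro g
    apply fbar_congr
    intro k hk
    rw [ind_inter, ind_mem _ _ (mem_coset_add H g k hk), one_mul]
  have hsz : ∀ g, ∑ x, ind (A ∩ coset H g) x = Nat.card H * fbar H (ind A) g := by
    intro g
    rw [sum_ind_coset H g _ Set.inter_subset_right, hr]
  have hρ : 0 < ε^2/16 := by positivity
  obtain ⟨K, hK, g', hg', B, hBA, hBc, hδ, j, hj1, hj2, hSR, hcnt⟩ :=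
    exists_piece (ε^2/16) hρ H g1 (A ∩ coset H g1) Set.inter_subset_right
      (by rw [hr]; linarith)
      (fun x => ∑ y, ind (A ∩ coset H g2) y * ind (A ∩ coset H g3) (x + y))
      (fun x => Finset.sum_nonneg fun y _ => mul_nonneg (ind_nonneg _ _) (ind_nonneg _ _)) _ htri
  rw [hr] at hj1
  refine ⟨K, hK, j, le_trans ?_ hj1, hj2, ?_⟩
  · apply mul_le_mul_of_nonneg_left _ (by positivity)
    linarith
  by_contra hcon
  push Not at hcon
  obtain ⟨hn2, hn3⟩ := hcon
  unfold Shat at hn2 hn3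
  push Not at hn2 hn3
  have hk := kpos K
  rw [hsz g1, sum_ind_coset K g' B hBc] at hcnt
  have hfb := fourier_bound (fun x => ind B x - fbar K (ind B) g' * ind (coset K g') x)
    (ind (A ∩ coset H g2)) (ind (A ∩ coset H g3)) _ (balanced_bound K g' _ hρ B hBc hSR)
  simp_rw [ind_sq, hsz] at hfb
  set τ : G n → ℝ := fun x => ∑ y, ind (A ∩ coset H g2) y * ind (A ∩ coset H g3) (x + y) with hτ
  have hsplit : ∑ x, (ind B x - fbar K (ind B) g' * ind (coset K g') x) * τ x
      = ∑ x, ind B x * τ x - fbar K (ind B) g' * (Nat.card K * fbar K τ g') := by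
    rw [← sum_coset]
    simp_rw [sub_mul, Finset.sum_sub_distrib, mul_assoc, ← Finset.mul_sum]
  have hX : fbar K τ g' = Nat.card H * fbar H
      (fun y => fbar K (ind (A ∩ coset H g3)) (y + g') * fbar K (ind A) y) g2 := by
    rw [hτ, fbar_tau, ← sum_coset]
    have := sum_fbar K (fun y => ind (coset H g2) y * fbar K (ind (A ∩ coset H g3)) (y + g'))
      (ind A) (by
        intro g k hkK
        rw [ind_coset_inv H _ _ _ (hK hkK), add_right_comm, fbar_inv _ _ _ _ hkK])
    simp_rw [← mul_assoc]
    rw [this]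
    refine Finset.sum_congr rfl fun y _ => ?_
    rw [ind_inter]; ring
  have hgg : g2 + g' + g3 ∈ H := by
    have h := H.add_mem hg' hg
    have e : g' + g1 + (g1 + g2 + g3) = g2 + g' + g3 + (g1 + g1) := by abel
    rwa [e, gself, add_zero] at h
  set d1 := fbar H (ind A) g1
  set d2 := fbar H (ind A) g2
  set d3 := fbar H (ind A) g3
  have hd2p : 0 < d2 := by nlinarith
  have hd3p : 0 < d3 := by nlinarith
  have hd1p : 0 < d1 := by nlinarith
  set X := fbar H
      (fun y => fbar K (ind (A ∩ coset H g3)) (y + g') * fbar K (ind A) y) g2 with hXdef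
  have hXlow : 3 / 16 * (d2 * d3) ≤ X := by
    set ι2 : G n → ℝ := fun y => if fbar K (ind A) y ≤ d2 / 2 then 1 else 0 with hι2
    set ι3 : G n → ℝ := fun y => if fbar K (ind A) y ≤ d3 / 2 then 1 else 0 with hι3
    have h3' : fbar H (fun y => ι3 (y + g')) g2 < 1/8 := by
      rw [fbar_shift]
      have := fbar_inv H ι3 g3 _ hgg
      have e : g3 + (g2 + g' + g3) = g2 + g' + (g3 + g3) := by abel
      rw [e, gself, add_zero] at this
      rw [this]; exact hn3
    have hlow : fbar H (fun y => d2 * d3 / 4 + (-(d2*d3/4) * ι2 y + -(d2*d3/4) * ι3 (y + g'))) g2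
        ≤ X := by
      apply fbar_mono
      intro h hh
      have e3 : fbar K (ind (A ∩ coset H g3)) (g2 + h + g') = fbar K (ind A) (g2 + h + g') := by
        apply fbar_congr
        intro k hkK
        rw [ind_inter, ind_mem, one_mul]
        show g2 + h + g' + k + g3 ∈ H
        have e : g2 + h + g' + k + g3 = (g2 + g' + g3) + (h + k) := by abel
        rw [e]
        exact H.add_mem hgg (H.add_mem hh (hK hkK))
      rw [e3]
      have n1 : 0 ≤ fbar K (ind A) (g2 + h + g') := fbar_nonneg _ _ _ (ind_nonneg A)
      have n2 : 0 ≤ fbar K (ind A) (g2 + h) := fbar_nonneg _ _ _ (ind_nonneg A)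
      have n3 := mul_nonneg n1 n2
      have n4 := mul_pos hd2p hd3p
      simp only [hι2, hι3]
      split_ifs with c1 c2 c2
      · linarith
      · linarith
      · linarith
      · push Not at c1 c2
        nlinarith
    rw [fbar_add, fbar_add, fbar_smul, fbar_smul, fbar_const] at hlow
    have n4 := mul_pos hd2p hd3p
    nlinarith
  rw [hsplit, hX] at hfb
  set δ := fbar K (ind B) g'
  set b := (Nat.card K : ℝ) * δ with hb
  have hbp : 0 < b := mul_pos hk hδ
  set S := ∑ x, ind B x * τ x
  set h := (Nat.card H : ℝ)
  have e : δ * ((Nat.card K : ℝ) * (h * X)) = b * h * X := by rw [hb]; ring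
  rw [e] at hfb
  exact shatter_num ε X d1 d2 d3 b h S hε hε1 hd1 hd2 hd3 hbp hH hXlow hfb hcnt

lemma tri_le {n : ℕ} (A C1 C2 C3 : Set (G n)) :
    ∑ x, ind (A ∩ C1) x * ∑ y, ind (A ∩ C2) y * ind (A ∩ C3) (x + y) ≤ (triCount A : ℝ) := by
  have hle : ∀ C : Set (G n), ∀ x, ind (A ∩ C) x ≤ ind A x := by
    intro C x
    rw [ind_inter]
    unfold ind; split_ifs <;> norm_num
  have h1 : ∑ x, ind (A ∩ C1) x * ∑ y, ind (A ∩ C2) y * ind (A ∩ C3) (x + y)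
      ≤ ∑ x, ∑ y, ind A x * (ind A y * ind A (x + y)) := by
    refine Finset.sum_le_sum fun x _ => ?_
    rw [Finset.mul_sum]
    refine Finset.sum_le_sum fun y _ => ?_
    have := @ind_nonneg n
    exact mul_le_mul (hle _ _) (mul_le_mul (hle _ _) (hle _ _) (this _ _) (this _ _))
      (mul_nonneg (this _ _) (this _ _)) (this _ _)
  refine h1.trans (le_of_eq ?_)
  rw [← Fintype.sum_prod_type' (f := fun x y => ind A x * (ind A y * ind A (x + y)))]
  have h2 : ∀ q : G n × G n, ind A q.1 * (ind A q.2 * ind A (q.1 + q.2))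
      = if q.1 ∈ A ∧ q.2 ∈ A ∧ q.1 + q.2 ∈ A then 1 else 0 := by
    intro q
    unfold ind
    by_cases a1 : q.1 ∈ A <;> by_cases a2 : q.2 ∈ A <;> by_cases a3 : q.1 + q.2 ∈ A <;>
      simp [a1, a2, a3]
  simp_rw [h2]
  rw [Finset.sum_boole, Nat.cast_inj, ← Fintype.card_subtype, ← Nat.card_eq_fintype_card]
  unfold triCount triBetween
  have key : ∀ p : G n × G n × G n, p.1 + p.2.1 + p.2.2 = 0 → p.1 + p.2.1 = p.2.2 := by
    intro p hp
    have : p.1 + p.2.1 + p.2.2 + p.2.2 = p.2.2 := by rw [hp, zero_add]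
    rwa [add_assoc _ p.2.2, gself, add_zero] at this
  refine Nat.card_congr ⟨fun q => ⟨(q.1.1, q.1.2, q.1.1 + q.1.2), q.2.1, q.2.2.1, q.2.2.2, gself _⟩,
    fun p => ⟨(p.1.1, p.1.2.1), p.2.1, p.2.2.1, ?_⟩, fun q => rfl, ?_⟩
  · show p.1.1 + p.1.2.1 ∈ A
    rw [key _ p.2.2.2.2]; exact p.2.2.2.1
  · intro p
    apply Subtype.ext
    show (p.1.1, p.1.2.1, p.1.1 + p.1.2.1) = p.1
    rw [key _ p.2.2.2.2]

lemma Shat_inv {n : ℕ} (A : Set (G n)) (H K : AddSubgroup (G n)) (g k : G n) (hk : k ∈ H) :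
    Shat A H K (g + k) ↔ Shat A H K g := by
  unfold Shat
  rw [fbar_inv _ (ind A) _ _ hk, fbar_inv _ _ _ _ hk]

lemma ent_gain (x d : ℝ) (hx : 0 ≤ x) (hd : 0 < d) :
    x * Real.log d + x - d + (if x ≤ d / 2 then 1 else 0) * (3 / 20 * d) ≤ ent x := by
  unfold ent
  rcases hx.eq_or_lt with rfl | hx
  · rw [if_pos (by linarith)]; simp; linarith
  have hl : ∀ y : ℝ, 0 < y → x * Real.log y + x - y ≤ x * Real.log x := by
    intro y hy
    have h := Real.log_le_sub_one_of_pos (div_pos hy hx)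
    rw [Real.log_div hy.ne' hx.ne'] at h
    have := mul_le_mul_of_nonneg_left h hx.le
    have e : x * (y / x - 1) = y - x := by field_simp
    rw [e] at this
    linarith
  split_ifs with hc
  · have h := hl (d/2) (by linarith)
    rw [Real.log_div hd.ne' (by norm_num)] at h
    have h2 := Real.log_two_lt_d9
    nlinarith
  · have := hl d hd
    linarith

lemma gain_nonneg {n : ℕ} (A : Set (G n)) (H H' : AddSubgroup (G n)) (h : H' ≤ H) (g : G n) :
    ent (fbar H (ind A) g) ≤ fbar H (fun x => ent (fbar H' (ind A) x)) g := by
  rw [← fbar_tower H' H h]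
  exact fbar_jensen H _ (fun x => fbar_nonneg _ _ _ (ind_nonneg A)) g

lemma gain_shat {n : ℕ} (A : Set (G n)) (H K H' : AddSubgroup (G n)) (hK : K ≤ H) (h : H' ≤ K)
    (g : G n) (hd : 0 < fbar H (ind A) g) (hS : Shat A H K g) :
    ent (fbar H (ind A) g) + 3 / 160 * fbar H (ind A) g
      ≤ fbar H (fun x => ent (fbar H' (ind A) x)) g := by
  have h1 : fbar H (fun x => ent (fbar K (ind A) x)) g
      ≤ fbar H (fun x => ent (fbar H' (ind A) x)) g := by
    rw [← fbar_tower K H hK (fun x => ent (fbar H' (ind A) x))]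
    apply fbar_mono
    intro k _
    exact gain_nonneg A K H' h _
  refine le_trans ?_ h1
  have hav := fbar_tower K H hK (ind A) g
  unfold Shat at hS
  set d := fbar H (ind A) g with hdd
  have h2 : fbar H (fun x => Real.log d * fbar K (ind A) x + (fbar K (ind A) x + (-d +
      3 / 20 * d * (if fbar K (ind A) x ≤ d / 2 then 1 else 0)))) g
      ≤ fbar H (fun x => ent (fbar K (ind A) x)) g := by
    apply fbar_mono
    intro k _
    have := ent_gain (fbar K (ind A) (g + k)) d (fbar_nonneg _ _ _ (ind_nonneg A)) hd
    linarith
  rw [fbar_add, fbar_add, fbar_add, fbar_smul, fbar_smul, fbar_const, hav] at h2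
  refine le_trans ?_ h2
  have : ent d = Real.log d * d := by unfold ent; ring
  rw [this]
  nlinarith

lemma meanEntG_eq {n : ℕ} (A : Set (G n)) (K : AddSubgroup (G n)) :
    meanEntG A K = (∑ g, ent (fbar K (ind A) g)) / 2^n := by
  unfold meanEntG
  simp_rw [dens_eq]
  congr 1
  simp

lemma relIndex_le {n : ℕ} (H K : AddSubgroup (G n)) (hK : K ≤ H) (j : ℕ)
    (h : Nat.card H ≤ 2^j * Nat.card K) : K.relIndex H ≤ 2^j := by
  have h1 := AddSubgroup.relIndex_mul_index hK
  have h2 := K.card_mul_index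
  rw [← H.card_mul_index, ← h1, ← mul_assoc] at h2
  have h3 : Nat.card K * K.relIndex H = Nat.card H :=
    Nat.eq_of_mul_eq_mul_right (Nat.pos_of_ne_zero AddSubgroup.index_ne_zero_of_finite) h2
  have hp : 0 < Nat.card K := Nat.card_pos
  rw [← h3, mul_comm] at h
  exact Nat.le_of_mul_le_mul_right h hp

lemma j_bound (ε : ℝ) (hε : 0 < ε) (j : ℕ)
    (h : (1 + ε^2/16)^j * (3 / 8 * ε) ≤ 1) :
    (2:ℝ)^j ≤ 2 ^ (Real.log (4 / ε) / Real.log (1 + ε ^ 2 / 16)) := by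
  have hρ : 0 < ε^2/16 := by positivity
  have hl : 0 < Real.log (1 + ε^2/16) := Real.log_pos (by linarith)
  rw [← Real.rpow_natCast]
  apply Real.rpow_le_rpow_of_exponent_le (by norm_num)
  rw [le_div_iff₀ hl, ← Real.log_pow]
  apply Real.log_le_log (by positivity)
  rw [le_div_iff₀ hε]
  linarith

theorem main_lemma {n : ℕ} (A : Set (G n)) (ε : ℝ) (hε : 0 < ε)
    (𝒯 : Finset (G n × G n × G n)) (hcard : (𝒯.card : ℝ) = ε * 2 ^ n)
    (htri : ∀ p ∈ 𝒯, p.1 + p.2.1 + p.2.2 = 0)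
    (hdisj : ∀ p ∈ 𝒯, ∀ q ∈ 𝒯, p ≠ q → Disjoint (elems p) (elems q))
    (hunion : A = ⋃ p ∈ 𝒯, elems p)
    (H : AddSubgroup (G n)) (T : ℕ) (hT : T = H.index)
    (hfew : (triCount A : ℝ) < ε ^ 3 / (64 * (T : ℝ) ^ 2) * ((2 : ℝ) ^ n) ^ 2) :
    ∃ H' : AddSubgroup (G n), H' ≤ H ∧
      meanEntG A H + ε / 3600 ≤ meanEntG A H' ∧
      (H'.index : ℝ)
        ≤ ((2 : ℝ) ^ (2 * (Real.log (4 / ε) / Real.log (1 + ε ^ 2 / 16)))) ^ T := by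
  have hN : (0:ℝ) < 2^n := by positivity
  have hcG : Nat.card (G n) = 2^n := by
    rw [Nat.card_eq_fintype_card]; simp
  have hcT : (Nat.card H : ℝ) * T = 2^n := by
    rw [hT]; exact_mod_cast H.card_mul_index.trans hcG
  have hT0 : 0 < T := by
    rw [hT]; exact Nat.pos_of_ne_zero AddSubgroup.index_ne_zero_of_finite
  -- injections out of 𝒯
  have hinj : ∀ (S : Finset (G n × G n × G n)) (q : G n × G n × G n → G n) (U : Set (G n)),
      S ⊆ 𝒯 → (∀ p ∈ S, q p ∈ elems p) → (∀ p ∈ S, q p ∈ U) →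
      (S.card : ℝ) ≤ ∑ x, ind U x := by
    intro S q U hS hq hU
    unfold ind
    rw [Finset.sum_boole, Nat.cast_le]
    refine Finset.card_le_card_of_injOn q (fun p hp => by simpa using hU p hp) ?_
    intro p hp p' hp' heq
    by_contra hne
    have := hdisj p (hS hp) p' (hS hp') hne
    exact Set.disjoint_left.mp this (hq p hp) (by
      show q p ∈ elems p'
      rw [heq]; exact hq p' hp')
  have hε1 : ε ≤ 1 := by
    have h := hinj 𝒯 (fun p => p.1) Set.univ (Finset.Subset.refl _)
      (fun p _ => by simp [elems]) (fun p _ => Set.mem_univ _)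
    rw [sum_ind, hcard, Nat.card_congr (Equiv.Set.univ (G n)), hcG] at h
    push_cast at h
    by_contra hc
    push Not at hc
    nlinarith
  have hmemA : ∀ p ∈ 𝒯, elems p ⊆ A := by
    intro p hp x hx
    rw [hunion]
    exact Set.mem_biUnion hp hx
  have hfew' : (triCount A : ℝ) < (ε / 4)^3 * (Nat.card H : ℝ)^2 := by
    refine lt_of_lt_of_eq hfew ?_
    rw [← hcT]
    have : (T:ℝ) ≠ 0 := by positivity
    field_simp
    norm_num
  let Sh : Set (G n) := {g | 3 / 4 * ε ≤ fbar H (ind A) g ∧ ∃ K ≤ H, ∃ j : ℕ,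
    (1 + ε^2/16)^j * (3 / 8 * ε) ≤ 1 ∧ Nat.card H ≤ 2^j * Nat.card K ∧ Shat A H K g}
  have hShinv : ∀ g k, k ∈ H → (g + k ∈ Sh ↔ g ∈ Sh) := by
    intro g k hk
    simp only [Sh, Set.mem_ofPred_eq, fbar_inv _ (ind A) _ _ hk, Shat_inv _ _ _ _ _ hk]
  -- bad set
  let Bad : Set (G n) := {g | fbar H (ind A) g < 3 / 4 * ε}
  have hindinv : ∀ U : Set (G n), (∀ g k, k ∈ H → (g + k ∈ U ↔ g ∈ U)) →
      ∑ x, ind (A ∩ U) x = ∑ g, ind U g * fbar H (ind A) g := by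
    intro U hU
    rw [sum_fbar]
    · simp_rw [ind_inter]
    · intro g k hk
      unfold ind
      by_cases h : g ∈ U
      · rw [if_pos h, if_pos ((hU g k hk).2 h)]
      · rw [if_neg h, if_neg (fun hx => h ((hU g k hk).1 hx))]
  have hbad : ∑ x, ind (A ∩ Bad) x ≤ 3 / 4 * ε * 2^n := by
    rw [hindinv Bad (by
      intro g k hk
      simp only [Bad, Set.mem_ofPred_eq, fbar_inv _ (ind A) _ _ hk])]
    calc ∑ g, ind Bad g * fbar H (ind A) g ≤ ∑ g : G n, 3 / 4 * ε := by
          refine Finset.sum_le_sum fun g _ => ?_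
          unfold ind
          split_ifs with h
          · rw [one_mul]; exact le_of_lt h
          · rw [zero_mul]; positivity
      _ = _ := by
          rw [Finset.sum_const, Finset.card_univ, ← Nat.card_eq_fintype_card, hcG]
          simp; ring
  let 𝒢 := 𝒯.filter (fun p => p.1 ∉ Bad ∧ p.2.1 ∉ Bad ∧ p.2.2 ∉ Bad)
  let ℬ := 𝒯.filter (fun p => ¬ (p.1 ∉ Bad ∧ p.2.1 ∉ Bad ∧ p.2.2 ∉ Bad))
  have hsum : (𝒢.card : ℝ) + ℬ.card = ε * 2^n := by
    rw [← hcard]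
    exact_mod_cast Finset.card_filter_add_card_filter_not _
  have hB : (ℬ.card : ℝ) ≤ 3 / 4 * ε * 2^n := by
    refine le_trans ?_ hbad
    have hex : ∀ p ∈ ℬ, ∃ x, x ∈ elems p ∧ x ∈ Bad := by
      intro p hp
      have := (Finset.mem_filter.1 hp).2
      by_contra hc
      push Not at hc
      exact this ⟨hc _ (by simp [elems]), hc _ (by simp [elems]), hc _ (by simp [elems])⟩
    choose! q hq1 hq2 using hex
    exact hinj ℬ q _ (Finset.filter_subset _ _) hq1
      (fun p hp => ⟨hmemA p (Finset.mem_filter.1 hp).1 (hq1 p hp), hq2 p hp⟩)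
  have hG : (𝒢.card : ℝ) ≤ ∑ x, ind (A ∩ Sh) x := by
    have hex : ∀ p ∈ 𝒢, ∃ x, x ∈ elems p ∧ x ∈ Sh := by
      intro p hp
      obtain ⟨hp1, hb1, hb2, hb3⟩ := Finset.mem_filter.1 hp
      simp only [Bad, Set.mem_ofPred_eq, not_lt] at hb1 hb2 hb3
      obtain ⟨K, hK, j, hj1, hj2, hS⟩ := shatter A H p.1 p.2.1 p.2.2
        (by rw [htri p hp1]; exact H.zero_mem) ε hε hε1 hb1 hb2 hb3
        (lt_of_le_of_lt (tri_le A _ _ _) hfew')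
      rcases hS with hS | hS
      · exact ⟨p.2.1, by simp [elems], hb2, K, hK, j, hj1, hj2, hS⟩
      · exact ⟨p.2.2, by simp [elems], hb3, K, hK, j, hj1, hj2, hS⟩
    choose! q hq1 hq2 using hex
    exact hinj 𝒢 q _ (Finset.filter_subset _ _) hq1
      (fun p hp => ⟨hmemA p (Finset.mem_filter.1 hp).1 (hq1 p hp), hq2 p hp⟩)
  have hShbig : ε / 4 * 2^n ≤ ∑ g, ind Sh g * fbar H (ind A) g := by
    rw [← hindinv Sh hShinv]
    linarith
  -- choose subgroups
  set L := Real.log (4 / ε) / Real.log (1 + ε ^ 2 / 16) with hL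
  have hρ : 0 < ε^2/16 := by positivity
  have hl : 0 < Real.log (1 + ε^2/16) := Real.log_pos (by linarith)
  have hL1 : 1 ≤ L := by
    rw [hL, le_div_iff₀ hl, one_mul]
    apply Real.log_le_log (by positivity)
    rw [le_div_iff₀ hε]
    nlinarith
  have hch : ∀ c : G n ⧸ H, ∃ K ≤ H, ((K.relIndex H : ℕ) : ℝ) ≤ 2 ^ L ∧
      (c.out ∈ Sh → Shat A H K c.out) := by
    intro c
    by_cases hc : c.out ∈ Sh
    · obtain ⟨-, K, hK, j, hj1, hj2, hS⟩ := id hc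
      refine ⟨K, hK, le_trans ?_ (j_bound ε hε j hj1), fun _ => hS⟩
      exact_mod_cast relIndex_le H K hK j hj2
    · refine ⟨H, le_rfl, ?_, fun h => absurd h hc⟩
      rw [AddSubgroup.relIndex_self]
      push_cast
      exact Real.one_le_rpow (by norm_num) (by linarith)
  choose Kc hKc1 hKc2 hKc3 using hch
  have hH' : (⨅ c, Kc c) ≤ H := (iInf_le Kc (0 : G n ⧸ H)).trans (hKc1 _)
  refine ⟨⨅ c, Kc c, hH', ?_, ?_⟩
  · rw [meanEntG_eq, meanEntG_eq]
    set H' := ⨅ c, Kc c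
    have h1 := sum_fbar H (fun _ => 1) (fun x => ent (fbar H' (ind A) x)) (fun _ _ _ => rfl)
    simp only [one_mul] at h1
    rw [← h1]
    have h2 : ∀ g, ent (fbar H (ind A) g) + 3 / 160 * (ind Sh g * fbar H (ind A) g)
        ≤ fbar H (fun x => ent (fbar H' (ind A) x)) g := by
      intro g
      by_cases hg : g ∈ Sh
      · rw [ind_mem _ _ hg, one_mul]
        have hd : 0 < fbar H (ind A) g := lt_of_lt_of_le (by positivity) hg.1
        obtain ⟨k, hk⟩ := QuotientAddGroup.mk_out_eq_add H g
        refine gain_shat A H (Kc (g : G n ⧸ H)) H' (hKc1 _) (iInf_le Kc _) g hd ?_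
        have := hKc3 (g : G n ⧸ H)
        rw [hk, hShinv _ _ k.2, Shat_inv _ _ _ _ _ k.2] at this
        exact this hg
      · have : ind Sh g = 0 := by unfold ind; rw [if_neg hg]
        rw [this, zero_mul, mul_zero, add_zero]
        exact gain_nonneg A H H' hH' g
    have h3 := Finset.sum_le_sum (fun g (_ : g ∈ Finset.univ) => h2 g)
    rw [Finset.sum_add_distrib, ← Finset.mul_sum] at h3
    rw [div_add' _ _ _ hN.ne']
    apply div_le_div_of_nonneg_right _ hN.le
    nlinarith
  · have h1 := AddSubgroup.relIndex_iInf_le (L := H) Kc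
    have h2 : (((⨅ c, Kc c).relIndex H : ℕ) : ℝ) ≤ (2 ^ L) ^ T := by
      calc (((⨅ c, Kc c).relIndex H : ℕ) : ℝ) ≤ ((∏ c, (Kc c).relIndex H : ℕ) : ℝ) := by
            exact_mod_cast h1
        _ ≤ ∏ c : G n ⧸ H, (2:ℝ) ^ L := by
            push_cast
            exact Finset.prod_le_prod (fun _ _ => by positivity) (fun c _ => hKc2 c)
        _ = (2 ^ L) ^ T := by
            rw [Finset.prod_const, Finset.card_univ, ← Nat.card_eq_fintype_card, hT]
            rfl
    rw [← AddSubgroup.relIndex_mul_index hH', ← hT]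
    push_cast
    have h3 : (T:ℝ) ≤ (2 ^ L) ^ T := by
      calc (T:ℝ) ≤ 2 ^ T := by exact_mod_cast Nat.lt_two_pow_self.le
        _ ≤ _ := by
          apply pow_le_pow_left₀ (by norm_num)
          calc (2:ℝ) = 2 ^ (1:ℝ) := by simp
            _ ≤ _ := Real.rpow_le_rpow_of_exponent_le (by norm_num) hL1
    have h4 : ((2:ℝ) ^ (2 * L)) ^ T = (2 ^ L) ^ T * (2 ^ L) ^ T := by
      rw [two_mul, Real.rpow_add (by norm_num), mul_pow]
    rw [h4]
    exact mul_le_mul h2 h3 (by positivity) (by positivity)
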